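/- There exists a universal constant C > 0 such that for all integers n ≥ 2 and m ≥ 1, |S_{n,m} − S̃_{n,m}| ≤ C(√m + ln n). -/

import Mathlib

open Finset

/-- The maximum entry of a tuple `j : Fin n → Fin (m+1)`, as a natural number. -/
def maxEntry {n m : ℕ} (j : Fin n → Fin (m + 1)) : ℕ :=
  Finset.univ.sup (fun i => (j i : ℕ))

/-- Expected value of `max_i X_i(t)` for the multivariate hypergeometric counts. -/
noncomputable def expMaxHyper (n m t : ℕ) : ℝ :=
  ∑ j ∈ univ.filter (fun j : Fin n → Fin (m + 1) => ∑ i, (j i : ℕ) = t),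
    ((∏ i, (Nat.choose m (j i : ℕ) : ℝ)) / (Nat.choose (n * m) t : ℝ)) * (maxEntry j : ℝ)

/-- `S n m`: expected number of correct guesses under the optimal strategy. -/
noncomputable def S (n m : ℕ) : ℝ :=
  ∑ t ∈ Finset.Icc 1 (n * m), expMaxHyper n m t / t

/-- The probability `P(Y = k)` for `Y ~ Binomial(m, p)`. -/
noncomputable def binomPMF (m : ℕ) (p : ℝ) (k : ℕ) : ℝ :=
  (Nat.choose m k : ℝ) * p ^ k * (1 - p) ^ (m - k)

/-- Expected value of `max_i Y_i` for `Y_1, …, Y_n` i.i.d. `Binomial(m, p)`. -/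
noncomputable def expMaxBinom (n m : ℕ) (p : ℝ) : ℝ :=
  ∑ j : Fin n → Fin (m + 1), (∏ i, binomPMF m p (j i : ℕ)) * (maxEntry j : ℝ)

/-- `S̃ n m`: the analogue of `S n m` with independent binomials `Y_i(t) ~ Bin(m, t/(nm))`. -/
noncomputable def Stilde (n m : ℕ) : ℝ :=
  ∑ t ∈ Finset.Icc 1 (n * m), expMaxBinom n m ((t : ℝ) / (n * m)) / t

/-! ### Product weights on tuples -/

/-- The expectation of a function of one coordinate under a product of probability weights. -/
theorem sum_prod_mul_apply {n M : ℕ} (w : Fin n → Fin M → ℝ) (hw : ∀ i, ∑ k, w i k = 1)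
    (a : Fin n) (g : Fin M → ℝ) :
    ∑ j : Fin n → Fin M, (∏ i, w i (j i)) * g (j a) = ∑ k, w a k * g k := by
  have key : ∀ j : Fin n → Fin M, (∏ i, w i (j i)) * g (j a)
      = ∏ i, (w i (j i) * if i = a then g (j i) else 1) := by
    intro j
    rw [Finset.prod_mul_distrib]
    simp
  simp_rw [key]
  rw [← Fintype.prod_sum (fun i k => w i k * if i = a then g k else 1)]
  rw [Finset.prod_eq_single a]
  · simp
  · intro b _ hb
    simp [hb, hw]
  · simp

/-! ### The binomial distribution -/

theorem binomPMF_nonneg {m : ℕ} {p : ℝ} (hp0 : 0 ≤ p) (hp1 : p ≤ 1) (k : ℕ) :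
    0 ≤ binomPMF m p k := by
  have : 0 ≤ 1 - p := by linarith
  unfold binomPMF
  positivity

theorem binomPMF_eq_zero {m k : ℕ} (p : ℝ) (h : m < k) : binomPMF m p k = 0 := by
  simp [binomPMF, Nat.choose_eq_zero_of_lt h]

theorem binomPMF_eq_eval (m k : ℕ) (p : ℝ) :
    binomPMF m p k = (bernsteinPolynomial ℝ m k).eval p := by
  simp [binomPMF, bernsteinPolynomial]

theorem sum_range_binomPMF (m : ℕ) (p : ℝ) : ∑ k ∈ range (m + 1), binomPMF m p k = 1 := by
  have h := congrArg (Polynomial.eval p) (bernsteinPolynomial.sum ℝ m)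
  simpa [Polynomial.eval_finsetSum, binomPMF_eq_eval] using h

theorem sum_range_binomPMF_mul (m : ℕ) (p : ℝ) :
    ∑ k ∈ range (m + 1), binomPMF m p k * k = m * p := by
  have h := congrArg (Polynomial.eval p) (bernsteinPolynomial.sum_smul ℝ m)
  simpa [Polynomial.eval_finsetSum, binomPMF_eq_eval, mul_comm] using h

theorem sum_fin_binomPMF_mul {l m : ℕ} (hl : l ≤ m) (p : ℝ) (g : ℕ → ℝ) :
    ∑ k : Fin (m + 1), binomPMF l p k * g k = ∑ k ∈ range (l + 1), binomPMF l p k * g k := by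
  rw [Fin.sum_univ_eq_sum_range (fun k => binomPMF l p k * g k)]
  symm
  apply Finset.sum_subset
  · intro k
    simp only [mem_range]
    omega
  · intro k _ hk
    rw [binomPMF_eq_zero p (by simpa using hk), zero_mul]

theorem sum_fin_binomPMF {l m : ℕ} (hl : l ≤ m) (p : ℝ) :
    ∑ k : Fin (m + 1), binomPMF l p k = 1 := by
  simpa [sum_range_binomPMF] using sum_fin_binomPMF_mul hl p (fun _ => 1)

theorem sum_fin_binomPMF_mul_val {l m : ℕ} (hl : l ≤ m) (p : ℝ) :
    ∑ k : Fin (m + 1), binomPMF l p k * ((k : ℕ) : ℝ) = l * p := by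
  simpa [sum_range_binomPMF_mul] using sum_fin_binomPMF_mul hl p (fun k => (k : ℝ))

/-- Thinning a `Binomial(m, p)` variable with probability `q` gives `Binomial(m, pq)`. -/
theorem binomPMF_thinning {m k : ℕ} (hk : k ≤ m) (p q : ℝ) :
    ∑ j : Fin (m + 1), binomPMF m p j * binomPMF j q k = binomPMF m (p * q) k := by
  rw [Fin.sum_univ_eq_sum_range (fun j => binomPMF m p j * binomPMF j q k)]
  obtain ⟨d, rfl⟩ := Nat.exists_eq_add_of_le hk
  rw [show k + d + 1 = k + (d + 1) by ring, Finset.sum_range_add,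
    Finset.sum_eq_zero, zero_add]
  · have hbin : (1 - p * q) ^ d
        = ∑ l ∈ range (d + 1), (p * (1 - q)) ^ l * (1 - p) ^ (d - l) * (d.choose l : ℝ) := by
      rw [← add_pow]
      ring
    unfold binomPMF
    rw [Nat.add_sub_cancel_left, hbin, Finset.mul_sum]
    refine Finset.sum_congr rfl fun l _ => ?_
    have hc : ((k + d).choose (k + l) : ℝ) * ((k + l).choose k : ℝ)
        = ((k + d).choose k : ℝ) * (d.choose l : ℝ) := by
      have h := Nat.choose_mul (n := k + d) (k := k + l) (s := k) (by omega)
      simp only [Nat.add_sub_cancel_left] at h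
      exact_mod_cast h
    rw [Nat.add_sub_cancel_left, Nat.add_sub_add_left, pow_add, mul_pow, mul_pow]
    linear_combination (p ^ k * p ^ l * (1 - p) ^ (d - l) * q ^ k * (1 - q) ^ l) * hc
  · intro j hj
    rw [binomPMF_eq_zero q (by simpa using hj), mul_zero]

/-! ### The expected maximum of independent binomials -/

theorem le_maxEntry {n m : ℕ} (j : Fin n → Fin (m + 1)) (i : Fin n) : (j i : ℕ) ≤ maxEntry j :=
  Finset.le_sup (f := fun i => (j i : ℕ)) (mem_univ i)

theorem exists_eq_maxEntry {n m : ℕ} (hn : 0 < n) (j : Fin n → Fin (m + 1)) :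
    ∃ i, maxEntry j = j i := by
  have : Nonempty (Fin n) := ⟨⟨0, hn⟩⟩
  obtain ⟨i, -, hi⟩ := Finset.exists_mem_eq_sup univ univ_nonempty (fun i => (j i : ℕ))
  exact ⟨i, hi⟩

theorem maxEntry_le_sum {n m : ℕ} (j : Fin n → Fin (m + 1)) : maxEntry j ≤ ∑ i, (j i : ℕ) :=
  Finset.sup_le fun i _ => Finset.single_le_sum (f := fun i => (j i : ℕ)) (by simp) (mem_univ i)

theorem expMaxBinom_le (n m : ℕ) {p : ℝ} (hp0 : 0 ≤ p) (hp1 : p ≤ 1) :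
    expMaxBinom n m p ≤ (n * m : ℕ) * p := by
  calc expMaxBinom n m p
      ≤ ∑ j : Fin n → Fin (m + 1), (∏ i, binomPMF m p (j i : ℕ)) * ∑ a, ((j a : ℕ) : ℝ) := by
        unfold expMaxBinom
        gcongr with j
        · exact Finset.prod_nonneg fun i _ => binomPMF_nonneg hp0 hp1 _
        · exact_mod_cast maxEntry_le_sum j
    _ = ∑ _a : Fin n, (m * p : ℝ) := by
        simp_rw [Finset.mul_sum]
        rw [Finset.sum_comm]
        refine Finset.sum_congr rfl fun a _ => ?_
        rw [sum_prod_mul_apply (fun _ k => binomPMF m p k) (fun _ => sum_fin_binomPMF le_rfl p) a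
          (fun k => ((k : ℕ) : ℝ)), sum_fin_binomPMF_mul_val le_rfl]
    _ = (n * m : ℕ) * p := by
        simp
        ring

theorem mul_expMaxBinom_le {n m : ℕ} (hn : 0 < n) {p q : ℝ} (hp0 : 0 ≤ p) (hp1 : p ≤ 1)
    (hq0 : 0 ≤ q) (hq1 : q ≤ 1) : q * expMaxBinom n m p ≤ expMaxBinom n m (p * q) := by
  have hthin : expMaxBinom n m (p * q) = ∑ j : Fin n → Fin (m + 1), (∏ i, binomPMF m p (j i)) *
      ∑ k : Fin n → Fin (m + 1), (∏ i, binomPMF (j i) q (k i)) * (maxEntry k : ℝ) := by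
    simp_rw [Finset.mul_sum]
    rw [Finset.sum_comm]
    refine Finset.sum_congr rfl fun k _ => ?_
    simp_rw [← mul_assoc, ← Finset.prod_mul_distrib]
    rw [← Finset.sum_mul,
      ← Fintype.prod_sum (fun i (j : Fin (m + 1)) => binomPMF m p j * binomPMF j q (k i))]
    simp_rw [fun i => binomPMF_thinning (Nat.lt_succ_iff.mp (k i).isLt) p q]
  rw [hthin]
  unfold expMaxBinom
  rw [Finset.mul_sum]
  refine Finset.sum_le_sum fun j _ => ?_
  rw [mul_left_comm]
  refine mul_le_mul_of_nonneg_left ?_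
    (Finset.prod_nonneg fun i _ => binomPMF_nonneg hp0 hp1 _)
  obtain ⟨a, ha⟩ := exists_eq_maxEntry hn j
  have hle : ∀ i, (j i : ℕ) ≤ m := fun i => Nat.lt_succ_iff.mp (j i).isLt
  calc q * (maxEntry j : ℝ)
      = ∑ k : Fin n → Fin (m + 1), (∏ i, binomPMF (j i) q (k i)) * ((k a : ℕ) : ℝ) := by
        rw [sum_prod_mul_apply (fun i k => binomPMF (j i) q k)
          (fun i => sum_fin_binomPMF (hle i) q) a (fun k => ((k : ℕ) : ℝ)),
          sum_fin_binomPMF_mul_val (hle a), ha, mul_comm]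
    _ ≤ _ := by
        gcongr with k
        · exact Finset.prod_nonneg fun i _ => binomPMF_nonneg hq0 hq1 _
        · exact_mod_cast le_maxEntry k a

/-! ### Conditioning on the total count -/

theorem expMaxHyper_zero (n m : ℕ) : expMaxHyper n m 0 = 0 := by
  refine Finset.sum_eq_zero fun j hj => ?_
  have h : maxEntry j = 0 := by
    have := maxEntry_le_sum j
    simp only [mem_filter, mem_univ, true_and] at hj
    omega
  simp [h]

theorem sum_val_le {n m : ℕ} (j : Fin n → Fin (m + 1)) : ∑ i, (j i : ℕ) ≤ n * m := by
  calc ∑ i, (j i : ℕ) ≤ ∑ _i : Fin n, m :=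
        Finset.sum_le_sum fun i _ => Nat.lt_succ_iff.mp (j i).isLt
    _ = n * m := by simp

theorem prod_binomPMF {n m : ℕ} (p : ℝ) (j : Fin n → Fin (m + 1)) :
    ∏ i, binomPMF m p (j i) = (∏ i, (m.choose (j i) : ℝ)) * p ^ (∑ i, (j i : ℕ)) *
      (1 - p) ^ (n * m - ∑ i, (j i : ℕ)) := by
  have h : ∑ i, (m - (j i : ℕ)) = n * m - ∑ i, (j i : ℕ) := by
    rw [Finset.sum_tsub_distrib _ fun i _ => Nat.lt_succ_iff.mp (j i).isLt]
    simp
  simp only [binomPMF, Finset.prod_mul_distrib, Finset.prod_pow_eq_pow_sum, h]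

/-- The ratio `expMaxBinom n m p / p`, extended polynomially to `p = 0`. -/
noncomputable def expMaxRatio (n m : ℕ) (p : ℝ) : ℝ :=
  ∑ s ∈ range (n * m),
    ((n * m).choose (s + 1) : ℝ) * expMaxHyper n m (s + 1) * (p ^ s * (1 - p) ^ (n * m - (s + 1)))

theorem expMaxBinom_eq_mul_expMaxRatio (n m : ℕ) (p : ℝ) :
    expMaxBinom n m p = p * expMaxRatio n m p := by
  have h : expMaxBinom n m p = ∑ s ∈ range (n * m + 1),
      ((n * m).choose s : ℝ) * expMaxHyper n m s * (p ^ s * (1 - p) ^ (n * m - s)) := by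
    unfold expMaxBinom
    rw [← Finset.sum_fiberwise_of_maps_to (s := univ) (t := range (n * m + 1))
      (g := fun j : Fin n → Fin (m + 1) => ∑ i, (j i : ℕ))
      (fun j _ => mem_range.mpr (Nat.lt_succ_of_le (sum_val_le j)))]
    refine Finset.sum_congr rfl fun s hs => ?_
    unfold expMaxHyper
    rw [Finset.mul_sum, Finset.sum_mul]
    refine Finset.sum_congr rfl fun j hj => ?_
    have hc : ((n * m).choose s : ℝ) ≠ 0 := by
      exact_mod_cast (Nat.choose_pos (Nat.lt_succ_iff.mp (mem_range.mp hs))).ne'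
    rw [prod_binomPMF, (mem_filter.mp hj).2]
    field_simp
  rw [h, Finset.sum_range_succ', expMaxHyper_zero, expMaxRatio, Finset.mul_sum]
  simp only [mul_zero, zero_mul, add_zero]
  refine Finset.sum_congr rfl fun s _ => ?_
  ring

theorem continuous_expMaxRatio (n m : ℕ) : Continuous (expMaxRatio n m) := by
  unfold expMaxRatio
  fun_prop

theorem expMaxRatio_nonneg (n m : ℕ) {p : ℝ} (hp0 : 0 ≤ p) (hp1 : p ≤ 1) :
    0 ≤ expMaxRatio n m p := by
  have : 0 ≤ 1 - p := by linarith
  unfold expMaxRatio expMaxHyper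
  positivity

theorem expMaxRatio_antitoneOn_Ioc {n m : ℕ} (hn : 0 < n) :
    AntitoneOn (expMaxRatio n m) (Set.Ioc 0 1) := by
  intro x hx y hy hxy
  have h := mul_expMaxBinom_le (m := m) hn hy.1.le hy.2 (div_nonneg hx.1.le hy.1.le)
    (div_le_one_of_le₀ hxy hy.1.le)
  rw [mul_div_cancel₀ _ hy.1.ne', expMaxBinom_eq_mul_expMaxRatio,
    expMaxBinom_eq_mul_expMaxRatio, ← mul_assoc, div_mul_cancel₀ _ hy.1.ne'] at h
  exact le_of_mul_le_mul_left h hx.1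

theorem tendsto_expMaxRatio_zero (n m : ℕ) :
    Filter.Tendsto (expMaxRatio n m) (nhdsWithin 0 (Set.Ioi 0)) (nhds (expMaxRatio n m 0)) :=
  (continuous_expMaxRatio n m).continuousWithinAt

theorem expMaxRatio_antitoneOn {n m : ℕ} (hn : 0 < n) :
    AntitoneOn (expMaxRatio n m) (Set.Icc 0 1) := by
  intro x hx y hy hxy
  rcases hx.1.eq_or_lt with rfl | hx0
  · rcases hy.1.eq_or_lt with rfl | hy0
    · exact le_rfl
    · refine ge_of_tendsto (tendsto_expMaxRatio_zero n m) ?_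
      filter_upwards [Ioo_mem_nhdsGT hy0] with z hz
      exact expMaxRatio_antitoneOn_Ioc hn ⟨hz.1, hz.2.le.trans hy.2⟩ ⟨hy0, hy.2⟩ hz.2.le
  · exact expMaxRatio_antitoneOn_Ioc hn ⟨hx0, hx.2⟩ ⟨hx0.trans_le hxy, hy.2⟩ hxy

theorem expMaxRatio_zero_le (n m : ℕ) : expMaxRatio n m 0 ≤ (n * m : ℕ) := by
  refine le_of_tendsto (tendsto_expMaxRatio_zero n m) ?_
  filter_upwards [Ioo_mem_nhdsGT one_pos] with z hz
  have h := expMaxBinom_le n m hz.1.le hz.2.le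
  rw [expMaxBinom_eq_mul_expMaxRatio, mul_comm] at h
  exact le_of_mul_le_mul_right h hz.1

/-! ### Comparison of the sum with the integral -/

theorem integral_pow_mul_one_sub_pow (a b : ℕ) :
    ((a + b + 1 : ℕ) : ℝ) * ((a + b).choose a : ℝ) * ∫ p in (0 : ℝ)..1, p ^ a * (1 - p) ^ b = 1 := by
  induction b generalizing a with
  | zero =>
    simp
    field_simp
  | succ b ih =>
    have hparts : ((a + 1 : ℕ) : ℝ) * ∫ p in (0 : ℝ)..1, p ^ a * (1 - p) ^ (b + 1)
        = ((b + 1 : ℕ) : ℝ) * ∫ p in (0 : ℝ)..1, p ^ (a + 1) * (1 - p) ^ b := by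
      have h := intervalIntegral.integral_mul_deriv_eq_deriv_mul (a := 0) (b := 1)
        (u := fun p : ℝ => (1 - p) ^ (b + 1)) (u' := fun p => -(((b + 1 : ℕ) : ℝ) * (1 - p) ^ b))
        (v := fun p => p ^ (a + 1)) (v' := fun p => ((a + 1 : ℕ) : ℝ) * p ^ a)
        (fun x _ => by
          simpa [Pi.pow_def] using ((hasDerivAt_id x).const_sub 1).pow (b + 1))
        (fun x _ => by simpa using hasDerivAt_pow (a + 1) x)
        (Continuous.intervalIntegrable (by fun_prop) _ _)
        (Continuous.intervalIntegrable (by fun_prop) _ _)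
      rw [← intervalIntegral.integral_const_mul, ← intervalIntegral.integral_const_mul]
      simp only [sub_self, ne_eq, Nat.add_eq_zero_iff, one_ne_zero, and_false, not_false_eq_true,
        zero_pow, zero_mul, mul_zero, sub_zero, neg_mul, intervalIntegral.integral_neg,
        sub_neg_eq_add, zero_add] at h
      convert h using 2 <;> · funext p; ring
    have hc : ((a + b + 1).choose (a + 1) : ℝ) * ((a + 1 : ℕ) : ℝ)
        = ((a + b + 1).choose a : ℝ) * ((b + 1 : ℕ) : ℝ) := by
      have h := Nat.choose_succ_right_eq (a + b + 1) a
      rw [show a + b + 1 - a = b + 1 by omega] at h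
      exact_mod_cast h
    have hi := ih (a + 1)
    rw [show a + 1 + b + 1 = a + (b + 1) + 1 by ring, show a + 1 + b = a + b + 1 by ring] at hi
    rw [show a + (b + 1) = a + b + 1 by ring] at hi ⊢
    have ha : ((a + 1 : ℕ) : ℝ) ≠ 0 := by positivity
    have hb : ((b + 1 : ℕ) : ℝ) ≠ 0 := by positivity
    apply mul_left_cancel₀ (mul_ne_zero ha hb)
    set I := ∫ p in (0 : ℝ)..1, p ^ a * (1 - p) ^ (b + 1)
    set J := ∫ p in (0 : ℝ)..1, p ^ (a + 1) * (1 - p) ^ b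
    linear_combination ((a + 1 : ℕ) : ℝ) * ((b + 1 : ℕ) : ℝ) * hi
      + ((a + b + 1 + 1 : ℕ) : ℝ) * ((a + b + 1).choose a : ℝ) * ((b + 1 : ℕ) : ℝ) * hparts
      - ((a + b + 1 + 1 : ℕ) : ℝ) * J * ((b + 1 : ℕ) : ℝ) * hc

theorem integral_expMaxRatio (n m : ℕ) : ∫ p in (0 : ℝ)..1, expMaxRatio n m p = S n m := by
  unfold expMaxRatio S
  rw [intervalIntegral.integral_finsetSum
    (fun s _ => Continuous.intervalIntegrable (by fun_prop) _ _), ← Finset.Ico_add_one_right_eq_Icc,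
    Finset.sum_Ico_eq_sum_range]
  refine Finset.sum_congr (by simp) fun s hs => ?_
  rw [intervalIntegral.integral_const_mul]
  obtain ⟨d, hd⟩ := Nat.exists_eq_add_of_lt (mem_range.mp hs)
  rw [Nat.add_sub_cancel] at hd
  have hI := integral_pow_mul_one_sub_pow s d
  rw [hd, show s + d + 1 - (s + 1) = d by omega]
  have hc : ((s + d + 1 : ℕ) : ℝ) * ((s + d).choose s : ℝ)
      = ((s + d + 1).choose (s + 1) : ℝ) * ((s + 1 : ℕ) : ℝ) := by
    exact_mod_cast Nat.add_one_mul_choose_eq (s + d) s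
  rw [hc] at hI
  rw [add_comm 1 s]
  have hs0 : ((s + 1 : ℕ) : ℝ) ≠ 0 := by positivity
  rw [eq_div_iff hs0]
  linear_combination expMaxHyper n m (s + 1) * hI

theorem Stilde_eq_sum_expMaxRatio {n m : ℕ} (hnm : 0 < n * m) :
    ((n * m : ℕ) : ℝ) * Stilde n m
      = ∑ t ∈ range (n * m), expMaxRatio n m (((t + 1 : ℕ) : ℝ) / (n * m : ℕ)) := by
  unfold Stilde
  rw [Finset.mul_sum, ← Finset.Ico_add_one_right_eq_Icc,
    Finset.sum_Ico_eq_sum_range]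
  refine Finset.sum_congr (by simp) fun t _ => ?_
  rw [expMaxBinom_eq_mul_expMaxRatio, add_comm 1 t, Nat.cast_mul]
  have h : (n : ℝ) * m ≠ 0 := by exact_mod_cast hnm.ne'
  have ht : ((t + 1 : ℕ) : ℝ) ≠ 0 := by positivity
  field_simp
  exact mul_div_cancel_left₀ _ h

theorem Stilde_le_S_le {n m : ℕ} (hn : 0 < n) (hm : 0 < m) :
    Stilde n m ≤ S n m ∧ S n m ≤ Stilde n m + 1 := by
  have hnm : 0 < n * m := Nat.mul_pos hn hm
  have hN : (0 : ℝ) < (n * m : ℕ) := by exact_mod_cast hnm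
  set N : ℕ := n * m with hNdef
  have hanti : AntitoneOn (fun x : ℝ => expMaxRatio n m (x / N)) (Set.Icc 0 (0 + N)) := by
    have hmem : ∀ x ∈ Set.Icc (0 : ℝ) (0 + N), x / N ∈ Set.Icc (0 : ℝ) 1 := fun x hx =>
      ⟨div_nonneg hx.1 hN.le, div_le_one_of_le₀ (by simpa using hx.2) hN.le⟩
    intro x hx y hy hxy
    exact expMaxRatio_antitoneOn hn (hmem x hx) (hmem y hy) (by gcongr)
  have hint : ∫ x in (0 : ℝ)..0 + N, expMaxRatio n m (x / N) = N * S n m := by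
    rw [intervalIntegral.integral_comp_div _ hN.ne', zero_add, zero_div, div_self hN.ne',
      integral_expMaxRatio, smul_eq_mul]
  have hlow := hanti.sum_le_integral
  have hupp := hanti.integral_le_sum
  simp only [zero_add] at hlow hupp hint
  rw [hint, ← Stilde_eq_sum_expMaxRatio hnm] at hlow
  refine ⟨le_of_mul_le_mul_left hlow hN, le_of_mul_le_mul_left ?_ hN⟩
  have htel := (Finset.sum_range_succ' (fun t : ℕ => expMaxRatio n m ((t : ℝ) / N)) N).symm.trans
    (Finset.sum_range_succ _ N)
  rw [← Stilde_eq_sum_expMaxRatio hnm, Nat.cast_zero, zero_div, div_self hN.ne'] at htel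
  have h0 := expMaxRatio_zero_le n m
  have h1 := expMaxRatio_nonneg n m zero_le_one le_rfl
  linarith

theorem stmt4 :
    ∃ C > 0, ∀ n m : ℕ, 2 ≤ n → 1 ≤ m →
      |S n m - Stilde n m| ≤ C * (Real.sqrt m + Real.log n) := by
  refine ⟨1, one_pos, fun n m hn hm => ?_⟩
  obtain ⟨hlow, hupp⟩ := Stilde_le_S_le (show 0 < n by omega) hm
  have hsqrt : 1 ≤ Real.sqrt m := Real.one_le_sqrt.mpr (by exact_mod_cast hm)
  have hlog : 0 ≤ Real.log n := Real.log_natCast_nonneg n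
  rw [abs_of_nonneg (by linarith)]
  linarith
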